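/- For every nonzero dominant integral weight Λ=c₀Λ₀+c₁Λ₁ of ŝl₂ and every real t≥0, the convex hull of the affine Weyl group orbit W(−Λ) is stable under translation by tδ; that is, Conv(W(−Λ)) + tδ ⊆ Conv(W(−Λ)). -/

import Mathlib

/-!
The Weyl group contains the translations `t_n` by `n α₁`, `n : ℤ`. The images of a weight `x` of
level `k = (x, δ)` lie on a parabola, `t_n x = x + n • u - n² k • δ` with `u` depending only on `x`.
The terms linear in `n` cancel in the midpoint of `t_n x` and `t_{-n} x`, which is `x - n² k • δ`.
For `k < 0` these midpoints go to infinity in the direction of `δ`, so the convex hull of the orbit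
contains the whole ray `x + ℝ≥0 • δ`.
-/

noncomputable section

namespace MVsl2

/-- The full weight space V̂ = ℝα₀ ⊕ ℝα₁ ⊕ ℝΛ₀, in coordinates (x₀, x₁, y). -/
abbrev Vhat : Type := ℝ × ℝ × ℝ

def Λ0 : Vhat := (0, 0, 1)
def Λ1 : Vhat := (0, 1/2, 1)
def α0h : Vhat := (1, 0, 0)
def α1h : Vhat := (0, 1, 0)
def δh : Vhat := (1, 1, 0)

/-- The bilinear form extended to V̂: (Λ₀,α₀)=1, (Λ₀,α₁)=0, (Λ₀,Λ₀)=0. -/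
def formh (x y : Vhat) : ℝ :=
  2 * x.1 * y.1 + 2 * x.2.1 * y.2.1 - 2 * x.1 * y.2.1 - 2 * x.2.1 * y.1 +
    x.2.2 * y.1 + x.1 * y.2.2

/-- The simple reflection s₀. -/
def s0h (x : Vhat) : Vhat := x - formh x α0h • α0h
/-- The simple reflection s₁. -/
def s1h (x : Vhat) : Vhat := x - formh x α1h • α1h

/-- The orbit of v under the affine Weyl group W of ŝl₂ (the group generated by
the involutions s₀ and s₁, so the orbit consists of all words in s₀, s₁ applied to v). -/
def WOrbit (v : Vhat) : Set Vhat :=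
  {x | ∃ l : List Bool, x = l.foldl (fun y b => if b then s1h y else s0h y) v}

theorem add_smul_mem_of_forall_parabola_mem {E : Type*} [AddCommGroup E] [Module ℝ E] {C : Set E}
    (hC : Convex ℝ C) {x u w : E} (h : ∀ n : ℤ, x + (n : ℝ) • u + (n : ℝ) ^ 2 • w ∈ C)
    {t : ℝ} (ht : 0 ≤ t) : x + t • w ∈ C := by
  obtain ⟨n, hn⟩ : ∃ n : ℕ, max 1 t ≤ n := exists_nat_ge _
  obtain ⟨one_le_n, t_le_n⟩ := max_le_iff.mp hn
  have sq_pos : 0 < (n : ℝ) ^ 2 := by positivity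
  have t_le_sq : t ≤ (n : ℝ) ^ 2 := t_le_n.trans (le_self_pow₀ one_le_n two_ne_zero)
  have base_mem : x ∈ C := by simpa using h 0
  have midpoint_mem : x + (n : ℝ) ^ 2 • w ∈ C := by
    convert hC.midpoint_mem (h n) (h (-n)) using 1
    rw [midpoint_eq_smul_add, invOf_eq_inv]
    push_cast
    module
  have fraction_mem : t / (n : ℝ) ^ 2 ∈ Set.Icc (0 : ℝ) 1 :=
    ⟨div_nonneg ht sq_pos.le, (div_le_one sq_pos).mpr t_le_sq⟩
  simpa [smul_smul, div_mul_cancel₀ t sq_pos.ne'] using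
    hC.add_smul_mem base_mem midpoint_mem fraction_mem

/-- The translation by `n α₁` in the affine Weyl group,
`t_β x = x + (x, δ) β - ((x, β) + (β, β) (x, δ) / 2) δ` for `β = n α₁`, with the terms collected by
powers of `n`. -/
def translation (n : ℤ) (x : Vhat) : Vhat :=
  x + (n : ℝ) • (formh x δh • α1h - formh x α1h • δh) + (n : ℝ) ^ 2 • (-formh x δh) • δh

theorem translation_zero (x : Vhat) : translation 0 x = x := by
  simp [translation]

theorem s0h_s1h_translation (n : ℤ) (x : Vhat) :
    s0h (s1h (translation n x)) = translation (n + 1) x := by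
  ext <;>
    simp only [translation, s0h, s1h, formh, α0h, α1h, δh, Prod.fst_add, Prod.snd_add, Prod.fst_sub,
      Prod.snd_sub, Prod.smul_fst, Prod.smul_snd, smul_eq_mul, Int.cast_add, Int.cast_one] <;>
    ring

theorem s1h_s0h_translation (n : ℤ) (x : Vhat) :
    s1h (s0h (translation n x)) = translation (n - 1) x := by
  ext <;>
    simp only [translation, s0h, s1h, formh, α0h, α1h, δh, Prod.fst_add, Prod.snd_add, Prod.fst_sub,
      Prod.snd_sub, Prod.smul_fst, Prod.smul_snd, smul_eq_mul, Int.cast_sub, Int.cast_one] <;>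
    ring

theorem formh_s0h_δh (x : Vhat) : formh (s0h x) δh = formh x δh := by
  simp [formh, s0h, α0h, δh]

theorem formh_s1h_δh (x : Vhat) : formh (s1h x) δh = formh x δh := by
  simp [formh, s1h, α1h, δh]

theorem s0h_mem_WOrbit {v x : Vhat} (hx : x ∈ WOrbit v) : s0h x ∈ WOrbit v := by
  obtain ⟨l, rfl⟩ := hx
  exact ⟨l ++ [false], by simp⟩

theorem s1h_mem_WOrbit {v x : Vhat} (hx : x ∈ WOrbit v) : s1h x ∈ WOrbit v := by
  obtain ⟨l, rfl⟩ := hx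
  exact ⟨l ++ [true], by simp⟩

theorem translation_mem_WOrbit {v x : Vhat} (hx : x ∈ WOrbit v) (n : ℤ) :
    translation n x ∈ WOrbit v := by
  induction n with
  | zero => rwa [translation_zero]
  | succ n ih => exact s0h_s1h_translation n x ▸ s0h_mem_WOrbit (s1h_mem_WOrbit ih)
  | pred n ih => exact s1h_s0h_translation (-n) x ▸ s1h_mem_WOrbit (s0h_mem_WOrbit ih)

theorem formh_δh_eq_of_mem_WOrbit {v x : Vhat} (hx : x ∈ WOrbit v) :
    formh x δh = formh v δh := by
  obtain ⟨l, rfl⟩ := hx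
  induction l generalizing v with
  | nil => rfl
  | cons b l ih =>
    rw [List.foldl_cons, ih]
    cases b
    · exact formh_s0h_δh v
    · exact formh_s1h_δh v

theorem add_smul_δh_mem_convexHull_of_mem_WOrbit {v x : Vhat} (hv : formh v δh < 0)
    (hx : x ∈ WOrbit v) {t : ℝ} (ht : 0 ≤ t) : x + t • δh ∈ convexHull ℝ (WOrbit v) := by
  have neg_level_pos : 0 < -formh x δh := by
    rw [formh_δh_eq_of_mem_WOrbit hx]
    exact neg_pos.mpr hv
  have ray_mem := add_smul_mem_of_forall_parabola_mem (convex_convexHull ℝ (WOrbit v))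
    (fun n ↦ subset_convexHull ℝ _ (translation_mem_WOrbit hx n)) (div_nonneg ht neg_level_pos.le)
  rwa [smul_smul, div_mul_cancel₀ t neg_level_pos.ne'] at ray_mem

theorem statement18_general {v : Vhat} (hv : formh v δh < 0) {t : ℝ} (ht : 0 ≤ t) :
    ∀ x ∈ convexHull ℝ (WOrbit v), x + t • δh ∈ convexHull ℝ (WOrbit v) :=
  convexHull_min (fun _ hx ↦ add_smul_δh_mem_convexHull_of_mem_WOrbit hv hx ht)
    ((convex_convexHull ℝ (WOrbit v)).translate_preimage_left (t • δh))

theorem formh_neg_dominantWeight_δh_neg {c0 c1 : ℕ} (hΛ : ¬ (c0 = 0 ∧ c1 = 0)) :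
    formh (-((c0 : ℝ) • Λ0 + (c1 : ℝ) • Λ1)) δh < 0 := by
  have level_eq : formh (-((c0 : ℝ) • Λ0 + (c1 : ℝ) • Λ1)) δh = -((c0 + c1 : ℕ) : ℝ) := by
    simp [formh, Λ0, Λ1, δh]
  rw [level_eq, neg_lt_zero, Nat.cast_pos]
  omega

/-- for every nonzero dominant integral weight Λ = c₀Λ₀ + c₁Λ₁ and
every t ≥ 0, the convex hull of the affine Weyl group orbit W(−Λ) is stable under
translation by tδ. -/
theorem statement18 (c0 c1 : ℕ) (hΛ : ¬ (c0 = 0 ∧ c1 = 0)) (t : ℝ) (ht : 0 ≤ t) :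
    ∀ x ∈ convexHull ℝ (WOrbit (-((c0 : ℝ) • Λ0 + (c1 : ℝ) • Λ1))),
      x + t • δh ∈ convexHull ℝ (WOrbit (-((c0 : ℝ) • Λ0 + (c1 : ℝ) • Λ1))) := by
  exact statement18_general (formh_neg_dominantWeight_δh_neg hΛ) ht

end MVsl2
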